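/- arXiv:1810.10577 — 8 statements merged into one kernel-verified Lean document; each statement's English description precedes it below -/
import Mathlib

section
/- Let G be the 3×3 toroidal chess graph. In the game of Cops and Robbers on G in which every cop is a knight and the robber is on foot, the cop number of G is exactly 2: two knight cops have a winning strategy, and one knight cop does not. -/
/-- Vertices of the `n × n` toroidal chess graph: pairs of coordinates mod `n`. -/
abbrev V (n : ℕ) : Type := ZMod n × ZMod n

/-- "On foot" moves (toroidal grid adjacency): the target differs from the current
vertex by `(±1,0)` or `(0,±1)` mod `n`. -/
def footMove (n : ℕ) (v w : V n) : Prop :=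
  w - v = (1, 0) ∨ w - v = (-1, 0) ∨ w - v = (0, 1) ∨ w - v = (0, -1)

/-- Knight moves: the target differs from the current vertex by `(±1,±2)` or
`(±2,±1)` mod `n`. -/
def knightMove (n : ℕ) (v w : V n) : Prop :=
  w - v = (1, 2) ∨ w - v = (1, -2) ∨ w - v = (-1, 2) ∨ w - v = (-1, -2) ∨
    w - v = (2, 1) ∨ w - v = (2, -1) ∨ w - v = (-2, 1) ∨ w - v = (-2, -1)

/-- One turn of a piece with allowable-move relation `R`: either stay on the current
vertex or move to an allowable vertex. -/
def stayOr {α : Type*} (R : α → α → Prop) (v w : α) : Prop := w = v ∨ R v w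

/-- `CopsWin copMove robMove c r t` holds when, from the position in which the `k`
cops occupy the vertices `c : Fin k → V n` (cop `i` moving by the relation
`copMove i`), the robber (moving by `robMove`) occupies `r`, and it is the cops'
turn iff `t = true`, the cops can force that after finitely many turns some cop
occupies the robber's vertex.  On the cops' turn every cop simultaneously either
stays or makes an allowable move; likewise for the robber on his turn. -/
inductive CopsWin {n k : ℕ} (copMove : Fin k → V n → V n → Prop)
    (robMove : V n → V n → Prop) : (Fin k → V n) → V n → Bool → Prop
  | caught {c : Fin k → V n} {r : V n} {t : Bool} (h : ∃ i, c i = r) :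
      CopsWin copMove robMove c r t
  | copsTurn {c : Fin k → V n} {r : V n} (c' : Fin k → V n)
      (h : ∀ i, stayOr (copMove i) (c i) (c' i))
      (hw : CopsWin copMove robMove c' r false) : CopsWin copMove robMove c r true
  | robTurn {c : Fin k → V n} {r : V n}
      (hw : ∀ r', stayOr robMove r r' → CopsWin copMove robMove c r' true) :
      CopsWin copMove robMove c r false

/-- The `k` cops have a winning strategy: they can choose starting vertices
(repetitions allowed) so that, whatever starting vertex the robber then chooses,
the cops (moving first) can force a capture in finitely many turns. -/
def CopsHaveWinningStrategy {n : ℕ} (k : ℕ) (copMove : Fin k → V n → V n → Prop)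
    (robMove : V n → V n → Prop) : Prop :=
  ∃ c : Fin k → V n, ∀ r : V n, CopsWin copMove robMove c r true

/-- The cop number of the `n × n` toroidal chess graph, for the game in which,
when there are `k` cops, cop `i` moves by the relation `copMove k i` and the
robber moves by `robMove`: the minimum number of cops having a winning strategy. -/
noncomputable def copNumber (n : ℕ) (copMove : ∀ k, Fin k → V n → V n → Prop)
    (robMove : V n → V n → Prop) : ℕ :=
  sInf {k | CopsHaveWinningStrategy k (copMove k) robMove}

/-!
Any `k` cops can be completed to more cops, the additional ones idling, so the cop number is `k + 1`
as soon as `k + 1` cops win and `k` cops do not.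

On the `3 × 3` torus a knight move changes both coordinates and a step on foot changes exactly one,
so a knight reaches in one turn precisely the vertices that are not foot-neighbours of its own.

*One knight loses.* The robber stands on a foot-neighbour of the knight. The knight cannot capture
him, and any two vertices are at foot-distance at most two, so the robber can always step back to a
foot-neighbour of the knight's new vertex.

*Two knights win.* A vertex out of reach of two foot-adjacent knights is foot-adjacent to both, so
it is the third vertex of their row or column; modulo 3 the vertices of a row or column sum to zero.
Knights on `(0, 0)` and `(1, 0)` force the robber to start on `(2, 0)`. The first knight moves to
`(1, 1)`; the only vertex out of reach is now `(1, 2)`, to which the robber cannot step.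
-/

section Game

variable {n k l : ℕ} {copMove : Fin k → V n → V n → Prop} {robMove : V n → V n → Prop}
  {c : Fin k → V n} {r : V n}

/-- Some cop can move to, or already occupies, the vertex `r`: a robber standing on `r` at the start
of the cops' turn is captured at once. -/
def Threatened (copMove : Fin k → V n → V n → Prop) (c : Fin k → V n) (r : V n) : Prop :=
  ∃ i, stayOr (copMove i) (c i) r

theorem Threatened.copsWin (h : Threatened copMove c r) : CopsWin copMove robMove c r true := by
  obtain ⟨i, hi⟩ := h
  refine .copsTurn (Function.update c i r) (fun j => ?_) (.caught ⟨i, Function.update_self ..⟩)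
  rcases eq_or_ne j i with rfl | hj
  · rwa [Function.update_self]
  · exact .inl (Function.update_of_ne hj ..)

theorem copsWin_of_forall_threatened (h : ∀ r', stayOr robMove r r' → Threatened copMove c r') :
    CopsWin copMove robMove c r false :=
  .robTurn fun r' hr' => (h r' hr').copsWin

/-- A robber strategy against `k` cops, given as an invariant: `safe c r` describes the positions,
with the cops to move, that the robber maintains. Whatever the cops do from such a position, they
do not land on the robber, and he has a reply leading to such a position again. -/
def IsEvasionInvariant (copMove : Fin k → V n → V n → Prop) (robMove : V n → V n → Prop)
    (safe : (Fin k → V n) → V n → Prop) : Prop :=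
  ∀ ⦃c c' r⦄, safe c r → (∀ i, stayOr (copMove i) (c i) (c' i)) →
    (∀ i, c' i ≠ r) ∧ ∃ r', stayOr robMove r r' ∧ safe c' r'

namespace IsEvasionInvariant

variable {safe : (Fin k → V n) → V n → Prop}

theorem not_copsWin (hinv : IsEvasionInvariant copMove robMove safe) (hsafe : safe c r) :
    ¬ CopsWin copMove robMove c r true := by
  suffices lost : ∀ {t c r}, CopsWin copMove robMove c r t →
      match t with
      | true => ¬ safe c r
      | false => (∀ i, c i ≠ r) → ∀ r', stayOr robMove r r' → ¬ safe c r' from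
    fun hwin => lost hwin hsafe
  intro t c r hwin
  induction hwin with
  | @caught c r t hcaught =>
    obtain ⟨i, hi⟩ := hcaught
    cases t with
    | true => exact fun hs => (hinv hs fun _ => .inl rfl).1 i hi
    | false => exact fun huncaught => absurd hi (huncaught i)
  | copsTurn c' hmove _ ih =>
    intro hs
    obtain ⟨huncaught, r', hr', hs'⟩ := hinv hs hmove
    exact ih huncaught r' hr' hs'
  | robTurn _ ih => exact fun _ => ih

theorem not_copsHaveWinningStrategy (hinv : IsEvasionInvariant copMove robMove safe)
    (hstart : ∀ c, ∃ r, safe c r) : ¬ CopsHaveWinningStrategy k copMove robMove := by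
  rintro ⟨c, hwin⟩
  obtain ⟨r, hr⟩ := hstart c
  exact hinv.not_copsWin hr (hwin r)

end IsEvasionInvariant

theorem CopsWin.of_embedding {copMove : Fin l → V n → V n → Prop} (e : Fin k ↪ Fin l) {t : Bool}
    (h : CopsWin (fun i => copMove (e i)) robMove c r t)
    {d : Fin l → V n} (hd : ∀ i, d (e i) = c i) :
    CopsWin copMove robMove d r t := by
  induction h generalizing d with
  | caught hcaught =>
    obtain ⟨i, hi⟩ := hcaught
    exact .caught ⟨e i, (hd i).trans hi⟩
  | copsTurn c' hmove _ ih =>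
    refine .copsTurn (Function.extend e c' d) (fun j => ?_)
      (ih fun i => e.injective.extend_apply ..)
    by_cases hj : ∃ i, e i = j
    · obtain ⟨i, rfl⟩ := hj
      rw [e.injective.extend_apply, hd]
      exact hmove i
    · exact .inl (Function.extend_apply' _ _ _ hj)
  | robTurn _ ih => exact .robTurn fun r' hr' => ih r' hr' hd

theorem CopsHaveWinningStrategy.of_embedding {copMove : Fin l → V n → V n → Prop}
    (e : Fin k ↪ Fin l) (h : CopsHaveWinningStrategy k (fun i => copMove (e i)) robMove) :
    CopsHaveWinningStrategy l copMove robMove := by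
  obtain ⟨c, hc⟩ := h
  exact ⟨Function.extend e c 0, fun r => (hc r).of_embedding e fun i => e.injective.extend_apply ..⟩

theorem copNumber_eq_succ_iff {move : V n → V n → Prop} :
    copNumber n (fun _ _ => move) robMove = k + 1 ↔
      CopsHaveWinningStrategy (k + 1) (fun _ => move) robMove ∧
        ¬ CopsHaveWinningStrategy k (fun _ => move) robMove :=
  Nat.sInf_upward_closed_eq_succ_iff
    (s := {k | CopsHaveWinningStrategy k (fun _ => move) robMove})
    (fun _ _ hle hwin => .of_embedding (Fin.castLEEmb hle) hwin) k

end Game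

section ThreeByThree

instance decidableFootMove {n : ℕ} (v w : V n) : Decidable (footMove n v w) :=
  inferInstanceAs (Decidable (_ ∨ _))

instance decidableKnightMove {n : ℕ} (v w : V n) : Decidable (knightMove n v w) :=
  inferInstanceAs (Decidable (_ ∨ _))

theorem footMove_three_iff : ∀ {v w : V 3}, footMove 3 v w ↔ (v.1 = w.1 ↔ v.2 ≠ w.2) := by
  decide

theorem knightMove_three_iff : ∀ {v w : V 3}, knightMove 3 v w ↔ v.1 ≠ w.1 ∧ v.2 ≠ w.2 := by
  decide

theorem stayOr_knightMove_three_iff {v w : V 3} :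
    stayOr (knightMove 3) v w ↔ ¬ footMove 3 v w := by
  rw [stayOr, knightMove_three_iff, footMove_three_iff, Prod.ext_iff]
  grind

theorem exists_stayOr_footMove_footMove_three (v w : V 3) :
    ∃ u, stayOr (footMove 3) v u ∧ footMove 3 w u := by
  rcases eq_or_ne v w with rfl | hne
  · have hstep : footMove 3 v (v + (1, 0)) := .inl (add_sub_cancel_left _ _)
    exact ⟨v + (1, 0), .inr hstep, hstep⟩
  by_cases hwv : footMove 3 w v
  · exact ⟨v, .inl rfl, hwv⟩
  · obtain ⟨hfst, hsnd⟩ : w.1 ≠ v.1 ∧ w.2 ≠ v.2 :=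
      knightMove_three_iff.mp ((stayOr_knightMove_three_iff.mpr hwv).resolve_left hne)
    have hcorner : footMove 3 v (v.1, w.2) := footMove_three_iff.mpr (by simpa using hsnd.symm)
    exact ⟨(v.1, w.2), .inr hcorner, footMove_three_iff.mpr (by simpa using hfst)⟩

theorem add_add_eq_zero_of_footMove_three :
    ∀ {u v w : V 3}, footMove 3 u v → footMove 3 u w → footMove 3 v w → u + v + w = 0 := by
  decide

theorem isEvasionInvariant_footMove_one_knight :
    IsEvasionInvariant (fun _ : Fin 1 => knightMove 3) (footMove 3)
      fun c r => footMove 3 (c 0) r := by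
  intro c c' r hfoot hmove
  refine ⟨fun i hi => ?_, exists_stayOr_footMove_footMove_three r (c' 0)⟩
  rw [Subsingleton.elim i 0] at hi
  exact stayOr_knightMove_three_iff.mp (hi ▸ hmove 0) hfoot

theorem not_copsHaveWinningStrategy_one_knight :
    ¬ CopsHaveWinningStrategy 1 (fun _ : Fin 1 => knightMove 3) (footMove 3) :=
  isEvasionInvariant_footMove_one_knight.not_copsHaveWinningStrategy
    fun c => ⟨c 0 + (1, 0), .inl (add_sub_cancel_left _ _)⟩

theorem threatened_or_add_add_eq_zero {v w : V 3} (hvw : footMove 3 v w) (r : V 3) :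
    Threatened (fun _ : Fin 2 => knightMove 3) ![v, w] r ∨ v + w + r = 0 := by
  by_cases hv : footMove 3 v r
  · by_cases hw : footMove 3 w r
    · exact .inr (add_add_eq_zero_of_footMove_three hvw hv hw)
    · exact .inl ⟨1, stayOr_knightMove_three_iff.mpr hw⟩
  · exact .inl ⟨0, stayOr_knightMove_three_iff.mpr hv⟩

theorem copsHaveWinningStrategy_two_knights :
    CopsHaveWinningStrategy 2 (fun _ : Fin 2 => knightMove 3) (footMove 3) := by
  refine ⟨![(0, 0), (1, 0)], fun r => ?_⟩
  rcases threatened_or_add_add_eq_zero (v := (0, 0)) (w := (1, 0)) (by decide) r with hr | hr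
  · exact hr.copsWin
  obtain rfl : r = (2, 0) := (eq_neg_of_add_eq_zero_right hr).trans (by decide)
  have hmove : ∀ i, stayOr (knightMove 3) (![(0, 0), (1, 0)] i) (![(1, 1), (1, 0)] i) :=
    Fin.forall_fin_two.mpr ⟨.inr (by decide), .inl rfl⟩
  refine .copsTurn ![(1, 1), (1, 0)] hmove (copsWin_of_forall_threatened fun r' hr' => ?_)
  refine (threatened_or_add_add_eq_zero (by decide) r').resolve_right fun hsum => ?_
  obtain rfl : r' = (1, 2) := (eq_neg_of_add_eq_zero_right hsum).trans (by decide)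
  exact hr'.elim (by decide) (by decide)

end ThreeByThree

/-- On the `3 × 3` toroidal chess graph, with every cop a knight
and the robber on foot, the cop number is exactly `2`: two knight cops have a
winning strategy, and one knight cop does not. -/
theorem copNumber_knights_footRobber_three_eq_two :
    copNumber 3 (fun _ _ => knightMove 3) (footMove 3) = 2 ∧
    CopsHaveWinningStrategy 2 (fun _ : Fin 2 => knightMove 3) (footMove 3) ∧
    ¬ CopsHaveWinningStrategy 1 (fun _ : Fin 1 => knightMove 3) (footMove 3) := by
  exact ⟨copNumber_eq_succ_iff.mpr
    ⟨copsHaveWinningStrategy_two_knights, not_copsHaveWinningStrategy_one_knight⟩,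
    copsHaveWinningStrategy_two_knights, not_copsHaveWinningStrategy_one_knight⟩
end

section
/- Let n ≥ 5 and consider the n×n toroidal chess graph with vertices in (ZMod n) × (ZMod n). For every vertex v and every pair of vertices c₁, c₂ (positions of two cops that are knights), at least one of the five vertices v, v+(1,0), v−(1,0), v+(0,1), v−(0,1) is not a knight-move target of c₁ and not a knight-move target of c₂. That is, two cops as knights cannot protect all five vertices of the 'plus' centered at v. -/
/-!
Write `(x, y)` for the center of the plus relative to a knight. The knight protects at most two of
its five vertices, whence two knights protect at most four. Indeed, the first coordinates of two
knight steps in the same row are equal or opposite.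

* If both horizontal arms `(x ± 1, y)` are knight steps, then `2 * x = 0`, so `x` is not a
  coordinate of a knight step, and the other three vertices, all in column `x`, are not protected.
  The same holds for the vertical arms.
* If the center and a horizontal arm are knight steps, then `2 * x = ±1`, which forces `x = ±2`.
  With a vertical arm as well, also `y = ±2`, and `(±2, ±2)` is not a knight step.

All this takes place in a commutative ring in which `3` and `4` do not vanish.
-/

open Finset

/-- The knight steps, i.e. the differences between target and source of a knight move, on the board
`R × R` over a commutative ring `R`. For `R = ZMod n` this is the toroidal board, for `R = ℤ` the
infinite one. -/
def IsKnightStep {R : Type*} [CommRing R] (d : R × R) : Prop :=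
  (d.1 = 1 ∨ d.1 = -1) ∧ (d.2 = 2 ∨ d.2 = -2) ∨ (d.1 = 2 ∨ d.1 = -2) ∧ (d.2 = 1 ∨ d.2 = -1)

/-- The plus centered at `v`: the vertex `v` together with its two horizontal and two vertical
neighbours, called its arms. -/
def plus {R : Type*} [CommRing R] [DecidableEq R] (v : R × R) : Finset (R × R) :=
  {v, v + (1, 0), v - (1, 0), v + (0, 1), v - (0, 1)}

section Board

variable {R : Type*} [CommRing R]

namespace IsKnightStep

variable {x x' y z : R}

lemma swap (h : IsKnightStep (x, y)) : IsKnightStep (y, x) := by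
  simp only [IsKnightStep] at h ⊢
  tauto

-- If `y` is both `±1` and `±2`, then `1 = 0` or `3 = 0`; either way `{1, -1} = {2, -2}`.
lemma fst_eq_or_eq_neg (h : IsKnightStep (x, y)) (h' : IsKnightStep (x', y)) :
    x' = x ∨ x' = -x := by
  simp only [IsKnightStep] at h h'
  grind

lemma two_mul_fst_ne_zero (h4 : (4 : R) ≠ 0) (h : IsKnightStep (x, y)) : 2 * x ≠ 0 := by
  simp only [IsKnightStep] at h
  grind

lemma not_of_horizontal_arms (h4 : (4 : R) ≠ 0) (hadd : IsKnightStep (x + 1, y))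
    (hsub : IsKnightStep (x - 1, y)) : ¬ IsKnightStep (x, z) := by
  intro h
  apply h.two_mul_fst_ne_zero h4
  rcases hadd.fst_eq_or_eq_neg hsub with heq | hneg
  · linear_combination -x * heq
  · linear_combination hneg

lemma not_of_vertical_arms (h4 : (4 : R) ≠ 0) (hadd : IsKnightStep (x, y + 1))
    (hsub : IsKnightStep (x, y - 1)) : ¬ IsKnightStep (z, y) :=
  fun h => hadd.swap.not_of_horizontal_arms h4 hsub.swap h.swap

lemma two_mul_fst_eq_one_or_eq_neg_one (h : IsKnightStep (x, y))
    (harm : IsKnightStep (x + 1, y) ∨ IsKnightStep (x - 1, y)) : 2 * x = 1 ∨ 2 * x = -1 := by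
  rcases harm with hadd | hsub
  · rcases h.fst_eq_or_eq_neg hadd with heq | hneg
    · exact .inl (by linear_combination (2 * x - 1) * heq)
    · exact .inr (by linear_combination hneg)
  · rcases h.fst_eq_or_eq_neg hsub with heq | hneg
    · exact .inl (by linear_combination (1 - 2 * x) * heq)
    · exact .inl (by linear_combination hneg)

-- If `x = ±1` and `2 * x = ±1`, then `1 = 0` or `3 = 0`, and `x = ±2` as well.
lemma fst_eq_two_or_eq_neg_two (h : IsKnightStep (x, y))
    (harm : IsKnightStep (x + 1, y) ∨ IsKnightStep (x - 1, y)) : x = 2 ∨ x = -2 := by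
  have htwo_mul := h.two_mul_fst_eq_one_or_eq_neg_one harm
  simp only [IsKnightStep] at h
  grind

lemma not_vertical_arm_of_horizontal_arm (h3 : (3 : R) ≠ 0) (h : IsKnightStep (x, y))
    (hhorizontal : IsKnightStep (x + 1, y) ∨ IsKnightStep (x - 1, y)) :
    ¬ (IsKnightStep (x, y + 1) ∨ IsKnightStep (x, y - 1)) := by
  intro hvertical
  have hx : x = 2 ∨ x = -2 := h.fst_eq_two_or_eq_neg_two hhorizontal
  have hy : y = 2 ∨ y = -2 := h.swap.fst_eq_two_or_eq_neg_two (hvertical.imp swap swap)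
  simp only [IsKnightStep] at h
  grind

end IsKnightStep

lemma card_plus [DecidableEq R] (h2 : (2 : R) ≠ 0) (v : R × R) : #(plus v) = 5 := by
  have hone : (1 : R) ≠ 0 := fun h => h2 (by linear_combination 2 * h)
  have hneg : (1 : R) ≠ -1 := fun h => h2 (by linear_combination h)
  simp [plus, sub_eq_add_neg, card_insert_of_notMem, hone, hneg]

open Classical in
lemma card_filter_isKnightStep_plus_le_two (h3 : (3 : R) ≠ 0) (h4 : (4 : R) ≠ 0) (v c : R × R) :
    #{w ∈ plus v | IsKnightStep (w - c)} ≤ 2 := by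
  obtain ⟨a, b⟩ := v
  obtain ⟨a', b'⟩ := c
  simp only [plus, filter_insert, filter_singleton, Prod.mk_add_mk, Prod.mk_sub_mk, add_zero,
    sub_zero, add_sub_right_comm, sub_right_comm _ (1 : R)]
  generalize a - a' = x, b - b' = y
  have hhorizontal : IsKnightStep (x + 1, y) → IsKnightStep (x - 1, y) →
      ∀ z, ¬ IsKnightStep (x, z) :=
    fun hadd hsub _ => hadd.not_of_horizontal_arms h4 hsub
  have hvertical : IsKnightStep (x, y + 1) → IsKnightStep (x, y - 1) →
      ∀ z, ¬ IsKnightStep (z, y) :=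
    fun hadd hsub _ => hadd.not_of_vertical_arms h4 hsub
  have hcenter : IsKnightStep (x, y) → IsKnightStep (x + 1, y) ∨ IsKnightStep (x - 1, y) →
      ¬ (IsKnightStep (x, y + 1) ∨ IsKnightStep (x, y - 1)) :=
    fun h => h.not_vertical_arm_of_horizontal_arm h3
  split_ifs <;> grind [card_insert_le]

theorem two_knights_cannot_protect_plus_general (h3 : (3 : R) ≠ 0) (h4 : (4 : R) ≠ 0)
    (v c₁ c₂ : R × R) :
    ∃ w : R × R,
      (w = v ∨ w = v + (1, 0) ∨ w = v - (1, 0) ∨ w = v + (0, 1) ∨ w = v - (0, 1)) ∧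
      ¬ IsKnightStep (w - c₁) ∧ ¬ IsKnightStep (w - c₂) := by
  classical
  have h2 : (2 : R) ≠ 0 := fun h => h4 (by linear_combination 2 * h)
  let protectedBy (c : R × R) : Finset (R × R) := {w ∈ plus v | IsKnightStep (w - c)}
  have hle (c : R × R) : #(protectedBy c) ≤ 2 := card_filter_isKnightStep_plus_le_two h3 h4 v c
  have hcard : #(protectedBy c₁ ∪ protectedBy c₂) < #(plus v) := calc
    #(protectedBy c₁ ∪ protectedBy c₂) ≤ #(protectedBy c₁) + #(protectedBy c₂) :=
      card_union_le _ _
    _ ≤ 2 + 2 := add_le_add (hle c₁) (hle c₂)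
    _ < #(plus v) := by simp [card_plus h2]
  obtain ⟨w, hw, hunprotected⟩ := exists_mem_notMem_of_card_lt_card hcard
  refine ⟨w, by simpa only [plus, mem_insert, mem_singleton] using hw, ?_⟩
  simpa [protectedBy, hw] using hunprotected

end Board

lemma knightMove_iff_isKnightStep {n : ℕ} {c w : V n} :
    knightMove n c w ↔ IsKnightStep (w - c) := by
  simp only [knightMove, IsKnightStep, Prod.ext_iff]
  tauto

lemma zmod_natCast_ne_zero_of_pos_of_lt {n k : ℕ} (hpos : 0 < k) (hlt : k < n) :
    (k : ZMod n) ≠ 0 :=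
  mt (ZMod.natCast_eq_zero_iff k n).mp (Nat.not_dvd_of_pos_of_lt hpos hlt)

/-- For `n ≥ 5`, on the `n × n` toroidal chess graph, for every
vertex `v` and every pair of vertices `c₁, c₂` (two cops that are knights), at
least one of the five vertices `v`, `v + (1,0)`, `v − (1,0)`, `v + (0,1)`,
`v − (0,1)` is a knight-move target of neither `c₁` nor `c₂`: two knight cops
cannot protect all five vertices of the "plus" centered at `v`. -/
theorem two_knights_cannot_protect_plus (n : ℕ) (hn : 5 ≤ n) (v c₁ c₂ : V n) :
    ∃ w : V n,
      (w = v ∨ w = v + (1, 0) ∨ w = v - (1, 0) ∨ w = v + (0, 1) ∨ w = v - (0, 1)) ∧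
      ¬ knightMove n c₁ w ∧ ¬ knightMove n c₂ w := by
  have h3 : (3 : ZMod n) ≠ 0 :=
    mod_cast zmod_natCast_ne_zero_of_pos_of_lt (k := 3) three_pos (by omega)
  have h4 : (4 : ZMod n) ≠ 0 :=
    mod_cast zmod_natCast_ne_zero_of_pos_of_lt (k := 4) four_pos (by omega)
  simpa only [knightMove_iff_isKnightStep] using
    two_knights_cannot_protect_plus_general h3 h4 v c₁ c₂
end

section
/- Let n ≥ 5 and consider the n×n toroidal chess graph with vertices in (ZMod n) × (ZMod n). No single vertex c has knight-move targets containing all three of the horizontally consecutive vertices v−(1,0), v, v+(1,0); that is, a single cop as a knight cannot protect three consecutive vertices of a row (and, symmetrically, of a column). -/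
/-- The squared Euclidean norm `x ^ 2 + y ^ 2` of a vector `(x, y)`, over an arbitrary commutative
ring so that it makes sense on the torus. Its level sets are the circles around the origin. -/
def sqNorm {R : Type*} [CommRing R] (p : R × R) : R := p.1 ^ 2 + p.2 ^ 2

theorem sqNorm_sq_eq_zero_of_sqNorm_sub_add_eq {R : Type*} [CommRing R] {p u : R × R}
    (hsub : sqNorm (p - u) = sqNorm p) (hadd : sqNorm (p + u) = sqNorm p) :
    sqNorm u ^ 2 = 0 := by
  simp only [sqNorm, Prod.fst_sub, Prod.snd_sub, Prod.fst_add, Prod.snd_add] at hsub hadd ⊢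
  have sqNorm_add_two_inner : u.1 ^ 2 + u.2 ^ 2 + 2 * (p.1 * u.1 + p.2 * u.2) = 0 := by
    linear_combination hadd
  have two_mul_sqNorm : 2 * (u.1 ^ 2 + u.2 ^ 2) = 0 := by
    linear_combination hsub + hadd
  linear_combination (u.1 ^ 2 + u.2 ^ 2) * sqNorm_add_two_inner -
    (p.1 * u.1 + p.2 * u.2) * two_mul_sqNorm

theorem knightMove.sqNorm_sub_eq_five {n : ℕ} {c w : V n} (h : knightMove n c w) :
    sqNorm (w - c) = 5 := by
  rcases h with h | h | h | h | h | h | h | h <;> rw [h, sqNorm] <;> ring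

theorem not_knightMove_sub_self_add {n : ℕ} {u : V n} (hu : sqNorm u ^ 2 ≠ 0) (v c : V n) :
    ¬ (knightMove n c (v - u) ∧ knightMove n c v ∧ knightMove n c (v + u)) := by
  rintro ⟨hsub, hself, hadd⟩
  refine hu (sqNorm_sq_eq_zero_of_sqNorm_sub_add_eq (p := v - c) ?_ ?_)
  · rw [sub_right_comm, hsub.sqNorm_sub_eq_five, hself.sqNorm_sub_eq_five]
  · rw [← add_sub_right_comm, hadd.sqNorm_sub_eq_five, hself.sqNorm_sub_eq_five]

theorem knight_cannot_protect_three_consecutive_general (n : ℕ) (hn : n ≠ 1) (v c : V n) :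
    ¬ (knightMove n c (v - (1, 0)) ∧ knightMove n c v ∧ knightMove n c (v + (1, 0))) ∧
    ¬ (knightMove n c (v - (0, 1)) ∧ knightMove n c v ∧ knightMove n c (v + (0, 1))) := by
  have : Nontrivial (ZMod n) := ZMod.nontrivial_iff.mpr hn
  exact ⟨not_knightMove_sub_self_add (by simp [sqNorm]) v c,
    not_knightMove_sub_self_add (by simp [sqNorm]) v c⟩

/-- For `n ≥ 5`, on the `n × n` toroidal chess graph, no vertex
`c` has knight-move targets containing all three horizontally consecutive
vertices `v − (1,0)`, `v`, `v + (1,0)`; symmetrically, none has targets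
containing the three vertically consecutive vertices `v − (0,1)`, `v`,
`v + (0,1)`.  A single knight cop cannot protect three consecutive vertices of a
row or of a column. -/
theorem knight_cannot_protect_three_consecutive (n : ℕ) (hn : 5 ≤ n) (v c : V n) :
    ¬ (knightMove n c (v - (1, 0)) ∧ knightMove n c v ∧ knightMove n c (v + (1, 0))) ∧
    ¬ (knightMove n c (v - (0, 1)) ∧ knightMove n c v ∧ knightMove n c (v + (0, 1))) :=
  knight_cannot_protect_three_consecutive_general n (by lia) v c
end

section
/- Let n ≥ 5 and let G be the n×n toroidal chess graph. In the game of Cops and Robbers on G in which every cop is a knight and the robber is on foot, the cop number of G is exactly 3: three knight cops have a winning strategy, and two knight cops do not. -/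
/-! ### Steps on the infinite board -/

/-- Displacements available to a knight on its turn: stay, or one of the eight knight moves. -/
def knightSteps : Finset (ℤ × ℤ) :=
  {(0, 0), (1, 2), (1, -2), (-1, 2), (-1, -2), (2, 1), (2, -1), (-2, 1), (-2, -1)}

/-- Displacements available to a player on foot on his turn: stay, or one of the four unit
steps. -/
def footSteps : Finset (ℤ × ℤ) :=
  {(0, 0), (1, 0), (-1, 0), (0, 1), (0, -1)}

/-- The covering projection from the plane lattice to the torus. -/
def proj (n : ℕ) : ℤ × ℤ →+ V n :=
  (Int.castAddHom (ZMod n)).prodMap (Int.castAddHom (ZMod n))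

lemma proj_apply (n : ℕ) (d : ℤ × ℤ) : proj n d = ((d.1 : ZMod n), (d.2 : ZMod n)) := rfl

lemma proj_surjective (n : ℕ) : Function.Surjective (proj n) :=
  ZMod.intCast_surjective.prodMap ZMod.intCast_surjective

lemma stayOr_knightMove_iff {n : ℕ} {v w : V n} :
    stayOr (knightMove n) v w ↔ ∃ m ∈ knightSteps, w = v + proj n m := by
  simp [stayOr, knightMove, knightSteps, proj_apply, sub_eq_iff_eq_add', Prod.mk_zero_zero]

lemma stayOr_footMove_iff {n : ℕ} {v w : V n} :
    stayOr (footMove n) v w ↔ ∃ e ∈ footSteps, w = v + proj n e := by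
  simp [stayOr, footMove, footSteps, proj_apply, sub_eq_iff_eq_add', Prod.mk_zero_zero]

lemma zero_mem_knightSteps : (0 : ℤ × ℤ) ∈ knightSteps := by decide

lemma neg_mem_knightSteps : ∀ m ∈ knightSteps, -m ∈ knightSteps := by decide

lemma closure_knightSteps : AddSubgroup.closure (knightSteps : Set (ℤ × ℤ)) = ⊤ := by
  have sum_mem : ∀ m₁ ∈ knightSteps, ∀ m₂ ∈ knightSteps, ∀ m₃ ∈ knightSteps,
      m₁ + m₂ + m₃ ∈ AddSubgroup.closure (knightSteps : Set (ℤ × ℤ)) := fun m₁ h₁ m₂ h₂ m₃ h₃ =>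
    add_mem (add_mem (AddSubgroup.mem_closure_of_mem h₁) (AddSubgroup.mem_closure_of_mem h₂))
      (AddSubgroup.mem_closure_of_mem h₃)
  have right : (1, 0) ∈ AddSubgroup.closure (knightSteps : Set (ℤ × ℤ)) := by
    simpa using sum_mem (1, 2) (by decide) (2, -1) (by decide) (-2, -1) (by decide)
  have up : (0, 1) ∈ AddSubgroup.closure (knightSteps : Set (ℤ × ℤ)) := by
    simpa using sum_mem (2, 1) (by decide) (-1, 2) (by decide) (-1, -2) (by decide)
  refine (AddSubgroup.eq_top_iff' _).2 fun ⟨x, y⟩ => ?_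
  simpa using add_mem (zsmul_mem right x) (zsmul_mem up y)

/-- The `ℓ¹`-norm, that is, the number of steps on foot. -/
def l1Norm (d : ℤ × ℤ) : ℕ := d.1.natAbs + d.2.natAbs

/-- The sup norm, that is, the number of king moves. -/
def supNorm (d : ℤ × ℤ) : ℕ := max d.1.natAbs d.2.natAbs

/-- The ball of radius `r` in the sup norm; every exhaustive check ranges over such a ball. -/
noncomputable def supBall (r : ℕ) : Finset (ℤ × ℤ) := Finset.Icc (-r : ℤ) r ×ˢ Finset.Icc (-r : ℤ) r

lemma mem_supBall {d : ℤ × ℤ} {r : ℕ} : d ∈ supBall r ↔ supNorm d ≤ r := by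
  simp only [supBall, supNorm, Finset.mem_product, Finset.mem_Icc]
  omega

lemma supNorm_le_l1Norm (d : ℤ × ℤ) : supNorm d ≤ l1Norm d := by
  simp only [supNorm, l1Norm]
  omega

lemma mem_supBall_of_l1Norm_le {d : ℤ × ℤ} {r : ℕ} (h : l1Norm d ≤ r) : d ∈ supBall r :=
  mem_supBall.2 ((supNorm_le_l1Norm d).trans h)

lemma supNorm_sub_le (a b : ℤ × ℤ) : supNorm (a - b) ≤ supNorm a + supNorm b := by
  simp only [supNorm, Prod.fst_sub, Prod.snd_sub]
  omega

lemma l1Norm_le_one_of_mem_footSteps : ∀ e ∈ footSteps, l1Norm e ≤ 1 := by decide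

lemma supNorm_le_two_of_mem_knightSteps : ∀ m ∈ knightSteps, supNorm m ≤ 2 := by decide

lemma supNorm_footStep_sub_knightStep_le {e m : ℤ × ℤ} (he : e ∈ footSteps)
    (hm : m ∈ knightSteps) : supNorm (e - m) ≤ 3 :=
  calc supNorm (e - m) ≤ supNorm e + supNorm m := supNorm_sub_le e m
    _ ≤ 1 + 2 := add_le_add ((supNorm_le_l1Norm e).trans (l1Norm_le_one_of_mem_footSteps e he))
      (supNorm_le_two_of_mem_knightSteps m hm)

lemma eq_zero_of_proj_eq_zero {n : ℕ} {d : ℤ × ℤ} (hd : supNorm d < n) (h : proj n d = 0) :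
    d = 0 := by
  simp only [supNorm] at hd
  rw [proj_apply, Prod.mk_eq_zero, ZMod.intCast_zmod_eq_zero_iff_dvd,
    ZMod.intCast_zmod_eq_zero_iff_dvd] at h
  exact Prod.ext (Int.eq_zero_of_dvd_of_natAbs_lt_natAbs h.1 (by omega))
    (Int.eq_zero_of_dvd_of_natAbs_lt_natAbs h.2 (by omega))

/-! ### Three knights win -/

/-- The knights standing at displacements `d i` from the robber, who is to move, force a capture,
wherever the robber stands. -/
def Wins (n : ℕ) {k : ℕ} (d : Fin k → ℤ × ℤ) : Prop :=
  ∀ r : V n, CopsWin (fun _ : Fin k => knightMove n) (footMove n)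
    (fun i => r + proj n (d i)) r false

section Wins

variable {n k : ℕ} {d : Fin k → ℤ × ℤ}

lemma Wins.of_eq_zero (i : Fin k) (h : d i = 0) : Wins n d :=
  fun r => .caught ⟨i, by simp [h]⟩

lemma Wins.of_forall_footStep
    (h : ∀ e ∈ footSteps, ∃ d', (∀ i, d' i - (d i - e) ∈ knightSteps) ∧ Wins n d') : Wins n d := by
  refine fun r => .robTurn fun r' hr' => ?_
  obtain ⟨e, he, rfl⟩ := stayOr_footMove_iff.1 hr'
  obtain ⟨d', hstep, hwins⟩ := h e he
  refine .copsTurn _ (fun i => stayOr_knightMove_iff.2 ⟨_, hstep i, ?_⟩) (hwins _)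
  simp only [map_sub]
  abel

lemma copsHaveWinningStrategy_of_forall_wins (h : ∀ d : Fin k → ℤ × ℤ, Wins n d) :
    CopsHaveWinningStrategy k (fun _ : Fin k => knightMove n) (footMove n) := by
  refine ⟨0, fun r => .copsTurn 0 (fun _ => .inl rfl) ?_⟩
  obtain ⟨d, hd⟩ := proj_surjective n (-r)
  convert h (fun _ => d) r using 1
  simp [hd, funext_iff]

end Wins

/-- The first two of three knights, at displacements `a` and `b`, lead to a capture irrespective
of the position of the third. -/
def PairWins (n : ℕ) (a b : ℤ × ℤ) : Prop := ∀ c, Wins n ![a, b, c]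

/-- Whatever step `e` the robber takes, the knights at displacements `a` and `b` can answer by
capturing him or by moving to displacements satisfying `T`. -/
def Forces (T : ℤ × ℤ → ℤ × ℤ → Prop) (a b : ℤ × ℤ) : Prop :=
  ∀ e ∈ footSteps, ∃ m ∈ knightSteps, ∃ m' ∈ knightSteps,
    a - e + m = 0 ∨ b - e + m' = 0 ∨ T (a - e + m) (b - e + m')

/-- Two knights pin the robber: any step other than staying put is answered by a capture. -/
def Pinned (a b : ℤ × ℤ) : Prop :=
  ∀ e ∈ footSteps, e ≠ 0 → e - a ∈ knightSteps ∨ e - b ∈ knightSteps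

/-- One knight diagonally adjacent to the robber and one orthogonally adjacent, on the same
side: up to symmetry, `(1, 1)` and `(1, 0)`, in either order. (With norms `0` and `3` the inner
product is `0`, and with `(±2, 0)` or `(0, ±2)` it is even.) -/
def Corner (a b : ℤ × ℤ) : Prop := l1Norm a + l1Norm b = 3 ∧ a.1 * b.1 + a.2 * b.2 = 1

/-- Two knights on distinct neighbours of the robber, or at displacements of `ℓ¹`-norm `2` that
are neither equal nor opposite. -/
def Separated (a b : ℤ × ℤ) : Prop :=
  l1Norm a = 1 ∧ l1Norm b = 1 ∧ a ≠ b ∨ l1Norm a = 2 ∧ l1Norm b = 2 ∧ a ≠ b ∧ a ≠ -b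

instance (T : ℤ × ℤ → ℤ × ℤ → Prop) [∀ a b, Decidable (T a b)] (a b : ℤ × ℤ) :
    Decidable (Forces T a b) := by unfold Forces; infer_instance

instance (a b : ℤ × ℤ) : Decidable (Pinned a b) := by unfold Pinned; infer_instance

instance (a b : ℤ × ℤ) : Decidable (Corner a b) := by unfold Corner; infer_instance

instance (a b : ℤ × ℤ) : Decidable (Separated a b) := by unfold Separated; infer_instance

lemma Corner.forces_pinned {a b : ℤ × ℤ} (h : Corner a b) : Forces Pinned a b := by
  have check : ∀ a ∈ supBall 3, ∀ b ∈ supBall 3, Corner a b → Forces Pinned a b := by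
    decide +kernel
  have hsum : l1Norm a + l1Norm b = 3 := h.1
  exact check a (mem_supBall_of_l1Norm_le (by omega)) b (mem_supBall_of_l1Norm_le (by omega)) h

lemma Separated.forces_corner_or_pinned {a b : ℤ × ℤ} (h : Separated a b) :
    Forces (fun a b => Corner a b ∨ Pinned a b) a b := by
  have check : ∀ a ∈ supBall 2, ∀ b ∈ supBall 2, Separated a b →
      Forces (fun a b => Corner a b ∨ Pinned a b) a b := by
    decide +kernel
  have hnorm : l1Norm a ≤ 2 ∧ l1Norm b ≤ 2 := by
    rcases h with ⟨ha, hb, -⟩ | ⟨ha, hb, -⟩ <;> omega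
  exact check a (mem_supBall_of_l1Norm_le hnorm.1) b (mem_supBall_of_l1Norm_le hnorm.2) h

lemma forces_separated_of_l1Norm_eq_two {a b : ℤ × ℤ} (ha : l1Norm a = 2) (hb : l1Norm b = 2) :
    Forces Separated a b := by
  have check : ∀ a ∈ supBall 2, ∀ b ∈ supBall 2, l1Norm a = 2 → l1Norm b = 2 →
      Forces Separated a b := by
    decide +kernel
  exact check a (mem_supBall_of_l1Norm_le ha.le) b (mem_supBall_of_l1Norm_le hb.le) ha hb

section PairWins

variable {n : ℕ} {a b : ℤ × ℤ}

lemma PairWins.of_eq_zero_left (h : a = 0) : PairWins n a b := fun _ => .of_eq_zero 0 h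

lemma PairWins.of_eq_zero_right (h : b = 0) : PairWins n a b := fun _ => .of_eq_zero 1 h

lemma PairWins.of_forces {T : ℤ × ℤ → ℤ × ℤ → Prop} (h : Forces T a b)
    (hT : ∀ a b, T a b → PairWins n a b) : PairWins n a b := by
  refine fun c => .of_forall_footStep fun e he => ?_
  obtain ⟨m, hm, m', hm', hforced⟩ := h e he
  have hwins : PairWins n (a - e + m) (b - e + m') := by
    rcases hforced with h | h | h
    exacts [.of_eq_zero_left h, .of_eq_zero_right h, hT _ _ h]
  refine ⟨![a - e + m, b - e + m', c - e], ?_, hwins _⟩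
  simp [Fin.forall_fin_succ, hm, hm', zero_mem_knightSteps]

lemma Pinned.wins_of_wins_add (h : Pinned a b) {m : ℤ × ℤ} (hm : m ∈ knightSteps) {c : ℤ × ℤ}
    (hc : Wins n ![a, b, c + m]) : Wins n ![a, b, c] := by
  refine .of_forall_footStep fun e he => ?_
  rcases eq_or_ne e 0 with rfl | he0
  · exact ⟨_, by simp [Fin.forall_fin_succ, hm, zero_mem_knightSteps], hc⟩
  rcases h e he he0 with h | h
  · refine ⟨![0, b - e, c - e], ?_, .of_eq_zero 0 rfl⟩
    simp [Fin.forall_fin_succ, h, zero_mem_knightSteps]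
  · refine ⟨![a - e, 0, c - e], ?_, .of_eq_zero 1 rfl⟩
    simp [Fin.forall_fin_succ, h, zero_mem_knightSteps]

lemma Pinned.pairWins (h : Pinned a b) : PairWins n a b := by
  intro c
  have hc : c ∈ AddSubgroup.closure (knightSteps : Set (ℤ × ℤ)) := by simp [closure_knightSteps]
  induction hc using AddSubgroup.closure_induction_left with
  | zero => exact .of_eq_zero 2 rfl
  | add_left m hm c _ ih =>
    exact h.wins_of_wins_add (neg_mem_knightSteps m hm) (by simpa [add_comm m] using ih)
  | neg_add_cancel m hm c _ ih =>
    exact h.wins_of_wins_add hm (by simpa [add_comm (-m)] using ih)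

lemma Corner.pairWins (h : Corner a b) : PairWins n a b :=
  .of_forces h.forces_pinned fun _ _ => Pinned.pairWins

lemma Separated.pairWins (h : Separated a b) : PairWins n a b :=
  .of_forces h.forces_corner_or_pinned fun _ _ h => h.elim Corner.pairWins Pinned.pairWins

lemma pairWins_of_l1Norm_eq_two (ha : l1Norm a = 2) (hb : l1Norm b = 2) : PairWins n a b :=
  .of_forces (forces_separated_of_l1Norm_eq_two ha hb) fun _ _ => Separated.pairWins

end PairWins

/-- A knight on the robber or at `ℓ¹`-norm `2` from him: the displacements that a single knight
can maintain forever. -/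
def Near (d : ℤ × ℤ) : Prop := d = 0 ∨ l1Norm d = 2

instance (d : ℤ × ℤ) : Decidable (Near d) := by unfold Near; infer_instance

/-- Distance still to be made up by a knight at displacement `d`: zero once it is near, and the
sup norm before that. -/
def gap (d : ℤ × ℤ) : ℕ := if Near d then 0 else supNorm d

lemma gap_le_supNorm (d : ℤ × ℤ) : gap d ≤ supNorm d := by
  unfold gap
  split_ifs <;> omega

lemma gap_eq_zero_iff {d : ℤ × ℤ} : gap d = 0 ↔ Near d := by
  refine ⟨fun h => ?_, fun h => if_pos h⟩
  by_contra hd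
  rw [gap, if_neg hd, supNorm] at h
  exact hd (.inl (Prod.ext (show d.1 = 0 by omega) (show d.2 = 0 by omega)))

lemma Near.exists_knightStep_near {d e : ℤ × ℤ} (hd : Near d) (he : e ∈ footSteps) :
    ∃ m ∈ knightSteps, Near (d - e + m) := by
  have check : ∀ d ∈ supBall 2, ∀ e ∈ footSteps, Near d →
      ∃ m ∈ knightSteps, Near (d - e + m) := by
    decide +kernel
  refine check d (mem_supBall_of_l1Norm_le ?_) e he hd
  rcases hd with rfl | hd
  exacts [Nat.zero_le 2, hd.le]

lemma exists_knightStep_near_of_l1Norm_le_two {p : ℤ × ℤ} (hp : l1Norm p ≤ 2) :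
    ∃ m ∈ knightSteps, Near (p + m) := by
  have check : ∀ p ∈ supBall 2, l1Norm p ≤ 2 → ∃ m ∈ knightSteps, Near (p + m) := by
    decide +kernel
  exact check p (mem_supBall_of_l1Norm_le hp) hp

lemma exists_sign_toward_zero (x : ℤ) : ∃ s : ℤ, (s = 1 ∨ s = -1) ∧
    ((x + s).natAbs + 1 = x.natAbs ∨ x.natAbs = 0 ∧ (x + s).natAbs = 1) ∧
    (2 ≤ x.natAbs → (x + 2 * s).natAbs + 2 = x.natAbs) := by
  rcases le_total 0 x with hx | hx
  exacts [⟨-1, by omega⟩, ⟨1, by omega⟩]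

lemma mk_mem_knightSteps {s t : ℤ} (hs : s = 1 ∨ s = -1) (ht : t = 1 ∨ t = -1) :
    (2 * s, t) ∈ knightSteps ∧ (s, 2 * t) ∈ knightSteps := by
  rcases hs with rfl | rfl <;> rcases ht with rfl | rfl <;> decide

/-- Absolute coordinates: the knight is at `(x, y)`, was at `(x₁, y₁)` before the robber's step
`(u, v)` and moves to `(x₂, y₂)`, by `2` along the larger coordinate. This lowers the sup norm by
`2`, whereas the robber raised it by at most `1`; if `x = y` it lowers the norm by only `1`, but
then the robber did not raise it. -/
lemma max_lt_max_of_knight_pursuit {x y u v x₁ y₁ x₂ y₂ : ℕ} (hxy : 3 ≤ x + y) (hle : y ≤ x)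
    (huv : u + v ≤ 1) (hx₁ : x ≤ x₁ + u) (hy₁ : y ≤ y₁ + v) (hx₂ : x₂ + 2 = x)
    (hy₂ : y₂ + 1 = y ∨ y = 0 ∧ y₂ = 1) : max x₂ y₂ < max x₁ y₁ := by
  omega

lemma exists_knightStep_supNorm_lt {p e : ℤ × ℤ} (hp : 3 ≤ l1Norm p) (he : e ∈ footSteps) :
    ∃ m ∈ knightSteps, supNorm (p + m) < supNorm (p + e) := by
  obtain ⟨s, hs, hs₁, hs₂⟩ := exists_sign_toward_zero p.1
  obtain ⟨t, ht, ht₁, ht₂⟩ := exists_sign_toward_zero p.2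
  have he₁ : e.1.natAbs + e.2.natAbs ≤ 1 := l1Norm_le_one_of_mem_footSteps e he
  have hx : p.1.natAbs ≤ (p.1 + e.1).natAbs + e.1.natAbs := by omega
  have hy : p.2.natAbs ≤ (p.2 + e.2).natAbs + e.2.natAbs := by omega
  simp only [l1Norm] at hp
  rcases le_total p.2.natAbs p.1.natAbs with hle | hle
  · exact ⟨(2 * s, t), (mk_mem_knightSteps hs ht).1,
      max_lt_max_of_knight_pursuit hp hle he₁ hx hy (hs₂ (by omega)) ht₁⟩
  · refine ⟨(s, 2 * t), (mk_mem_knightSteps hs ht).2, ?_⟩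
    rw [supNorm, supNorm, max_comm, max_comm (p + e).1.natAbs]
    rw [add_comm] at hp he₁
    exact max_lt_max_of_knight_pursuit hp hle he₁ hy hx (ht₂ (by omega)) hs₁

/-- Truncated subtraction: once the gap is `0`, the step keeps it there. -/
lemma exists_knightStep_gap_le (d : ℤ × ℤ) {e : ℤ × ℤ} (he : e ∈ footSteps) :
    ∃ m ∈ knightSteps, gap (d - e + m) ≤ gap d - 1 := by
  by_cases hd : Near d
  · obtain ⟨m, hm, hnear⟩ := hd.exists_knightStep_near he
    exact ⟨m, hm, by simp [gap_eq_zero_iff.2 hnear]⟩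
  rcases le_or_gt (l1Norm (d - e)) 2 with hp | hp
  · obtain ⟨m, hm, hnear⟩ := exists_knightStep_near_of_l1Norm_le_two hp
    exact ⟨m, hm, by simp [gap_eq_zero_iff.2 hnear]⟩
  · obtain ⟨m, hm, hlt⟩ := exists_knightStep_supNorm_lt hp he
    refine ⟨m, hm, ?_⟩
    calc gap (d - e + m) ≤ supNorm (d - e + m) := gap_le_supNorm _
      _ ≤ supNorm d - 1 := Nat.le_sub_one_of_lt (by simpa using hlt)
      _ = gap d - 1 := by rw [gap, if_neg hd]

lemma pairWins_of_gap_le (n N : ℕ) :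
    ∀ {a b : ℤ × ℤ}, gap a ≤ N → gap b ≤ N → PairWins n a b := by
  induction N with
  | zero =>
    intro a b ha hb
    rcases gap_eq_zero_iff.1 (Nat.le_zero.1 ha) with ha | ha
    · exact .of_eq_zero_left ha
    rcases gap_eq_zero_iff.1 (Nat.le_zero.1 hb) with hb | hb
    · exact .of_eq_zero_right hb
    · exact pairWins_of_l1Norm_eq_two ha hb
  | succ N ih =>
    intro a b ha hb
    have closer : Forces (fun a b => gap a ≤ N ∧ gap b ≤ N) a b := by
      intro e he
      obtain ⟨m, hm, hgap⟩ := exists_knightStep_gap_le a he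
      obtain ⟨m', hm', hgap'⟩ := exists_knightStep_gap_le b he
      exact ⟨m, hm, m', hm', .inr (.inr ⟨by omega, by omega⟩)⟩
    exact .of_forces closer fun _ _ h => ih h.1 h.2

lemma pairWins (n : ℕ) (a b : ℤ × ℤ) : PairWins n a b :=
  pairWins_of_gap_le n _ (le_max_left _ _) (le_max_right _ _)

theorem copsHaveWinningStrategy_three_knights (n : ℕ) :
    CopsHaveWinningStrategy 3 (fun _ : Fin 3 => knightMove n) (footMove n) := by
  refine copsHaveWinningStrategy_of_forall_wins fun d => ?_
  have hd : d = ![d 0, d 1, d 2] := by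
    ext i : 1
    fin_cases i <;> rfl
  exact hd ▸ pairWins n (d 0) (d 1) (d 2)

/-! ### Two knights do not win -/

/-- From any position in which he is not caught, the robber has a turn ending on a vertex that no
cop can reach on the following turn. -/
def RobberEvades {n k : ℕ} (copMove : Fin k → V n → V n → Prop) (robMove : V n → V n → Prop) :
    Prop :=
  ∀ c : Fin k → V n, ∀ r, (∀ i, c i ≠ r) →
    ∃ r', stayOr robMove r r' ∧ ∀ i, ¬ stayOr (copMove i) (c i) r'

section Evasion

variable {n k : ℕ} {copMove : Fin k → V n → V n → Prop} {robMove : V n → V n → Prop}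

lemma RobberEvades.exists_threat (hev : RobberEvades copMove robMove) {c : Fin k → V n} {r : V n}
    {t : Bool} (h : CopsWin copMove robMove c r t) :
    ∃ i, c i = r ∨ t = true ∧ stayOr (copMove i) (c i) r := by
  induction h with
  | caught h => exact h.imp fun _ => .inl
  | copsTurn c' h _ ih =>
    obtain ⟨i, rfl | ⟨hfalse, -⟩⟩ := ih
    · exact ⟨i, .inr ⟨rfl, h i⟩⟩
    · cases hfalse
  | @robTurn c r _ ih =>
    by_contra! hfree
    obtain ⟨r', hr', hsafe⟩ := hev c r fun i => (hfree i).1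
    obtain ⟨i, hi | ⟨-, hi⟩⟩ := ih r' hr'
    · exact hsafe i (.inl hi.symm)
    · exact hsafe i hi

lemma RobberEvades.not_copsHaveWinningStrategy [NeZero n] (hev : RobberEvades copMove robMove)
    (hk : k < Fintype.card (V n)) : ¬ CopsHaveWinningStrategy k copMove robMove := by
  rintro ⟨c, hc⟩
  have hc_not_surj : ¬ Function.Surjective c := fun hsurj =>
    hk.not_ge (by simpa using Fintype.card_le_of_surjective c hsurj)
  obtain ⟨r₀, hr₀⟩ := not_forall.1 hc_not_surj
  obtain ⟨r, -, hsafe⟩ := hev c r₀ (not_exists.1 hr₀)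
  obtain ⟨i, hi | ⟨-, hi⟩⟩ := hev.exists_threat (hc r)
  · exact hsafe i (.inl hi.symm)
  · exact hsafe i hi

end Evasion

/-- The steps `e` of the robber after which a knight at displacement `d` captures him at once. -/
def covered (n : ℕ) (d : V n) : Finset (ℤ × ℤ) :=
  footSteps.filter fun e => ∃ m ∈ knightSteps, proj n e = d + proj n m

lemma card_filter_sub_mem_knightSteps_le_two : ∀ d ∈ supBall 3, d ≠ 0 →
    (footSteps.filter fun e => e - d ∈ knightSteps).card ≤ 2 := by
  decide +kernel

lemma covered_proj_subset {n : ℕ} {d : ℤ × ℤ} (hd : supNorm d + 3 < n) :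
    covered n (proj n d) ⊆ footSteps.filter fun e => e - d ∈ knightSteps := by
  intro e he_covered
  obtain ⟨he, m, hm, hproj⟩ := Finset.mem_filter.1 he_covered
  have hnorm : supNorm (e - m - d) < n := by
    have hle := supNorm_footStep_sub_knightStep_le he hm
    have hsub := supNorm_sub_le (e - m) d
    omega
  have hzero : e - m - d = 0 :=
    eq_zero_of_proj_eq_zero hnorm (by simp only [map_sub, hproj]; abel)
  have hm_eq : e - d = m := by rw [← sub_eq_zero, sub_right_comm, hzero]
  exact Finset.mem_filter.2 ⟨he, hm_eq ▸ hm⟩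

/-- When `n ≥ 7` the relevant displacements are too short to wrap around the torus, so the count is
that of the infinite board. -/
lemma card_covered_le_two_of_seven_le {n : ℕ} (hn : 7 ≤ n) {d : V n} (hd : d ≠ 0) :
    (covered n d).card ≤ 2 := by
  rcases (covered n d).eq_empty_or_nonempty with hempty | ⟨e, he_covered⟩
  · simp [hempty]
  obtain ⟨he, m, hm, hproj⟩ := Finset.mem_filter.1 he_covered
  obtain rfl : d = proj n (e - m) := by rw [map_sub, hproj, add_sub_cancel_right]
  have hnorm : supNorm (e - m) ≤ 3 := supNorm_footStep_sub_knightStep_le he hm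
  have hne : e - m ≠ 0 := fun h => hd (by rw [h, map_zero])
  exact (Finset.card_le_card (covered_proj_subset (by omega))).trans
    (card_filter_sub_mem_knightSteps_le_two _ (mem_supBall.2 hnorm) hne)

lemma card_covered_five_le_two : ∀ d : V 5, d ≠ 0 → (covered 5 d).card ≤ 2 := by
  simp only [covered, proj_apply]
  decide +kernel

lemma card_covered_six_le_two : ∀ d : V 6, d ≠ 0 → (covered 6 d).card ≤ 2 := by
  simp only [covered, proj_apply]
  decide +kernel

lemma card_covered_le_two {n : ℕ} (hn : 5 ≤ n) {d : V n} (hd : d ≠ 0) :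
    (covered n d).card ≤ 2 := by
  obtain rfl | rfl | hn : n = 5 ∨ n = 6 ∨ 7 ≤ n := by omega
  exacts [card_covered_five_le_two d hd, card_covered_six_le_two d hd,
    card_covered_le_two_of_seven_le hn hd]

lemma robberEvades_knights {n k : ℕ} (hn : 5 ≤ n) (hk : k ≤ 2) :
    RobberEvades (fun _ : Fin k => knightMove n) (footMove n) := by
  intro c r hfree
  have hcard : (Finset.univ.biUnion fun i => covered n (c i - r)).card < footSteps.card := by
    calc _ ≤ (Finset.univ : Finset (Fin k)).card * 2 :=
          Finset.card_biUnion_le_card_mul _ _ _ fun i _ =>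
            card_covered_le_two hn (sub_ne_zero.2 (hfree i))
      _ ≤ 4 := by rw [Finset.card_fin]; omega
      _ < footSteps.card := by decide
  obtain ⟨e, he, hfree_step⟩ := Finset.exists_mem_notMem_of_card_lt_card hcard
  refine ⟨r + proj n e, stayOr_footMove_iff.2 ⟨e, he, rfl⟩, fun i hi => hfree_step ?_⟩
  obtain ⟨m, hm, hcapture⟩ := stayOr_knightMove_iff.1 hi
  refine Finset.mem_biUnion.2 ⟨i, Finset.mem_univ _, Finset.mem_filter.2 ⟨he, m, hm, ?_⟩⟩
  rw [sub_add_eq_add_sub, ← hcapture, add_sub_cancel_left]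

theorem not_copsHaveWinningStrategy_knights {n k : ℕ} (hn : 5 ≤ n) (hk : k ≤ 2) :
    ¬ CopsHaveWinningStrategy k (fun _ : Fin k => knightMove n) (footMove n) := by
  have : NeZero n := ⟨by omega⟩
  refine (robberEvades_knights hn hk).not_copsHaveWinningStrategy ?_
  rw [Fintype.card_prod, ZMod.card]
  nlinarith

/-- For `n ≥ 5`, on the `n × n` toroidal chess graph with every
cop a knight and the robber on foot, the cop number is exactly `3`: three knight
cops have a winning strategy, and two knight cops do not. -/
theorem copNumber_knights_footRobber_eq_three (n : ℕ) (hn : 5 ≤ n) :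
    copNumber n (fun _ _ => knightMove n) (footMove n) = 3 ∧
    CopsHaveWinningStrategy 3 (fun _ : Fin 3 => knightMove n) (footMove n) ∧
    ¬ CopsHaveWinningStrategy 2 (fun _ : Fin 2 => knightMove n) (footMove n) := by
  have three_win := copsHaveWinningStrategy_three_knights n
  refine ⟨le_antisymm (Nat.sInf_le three_win) (le_csInf ⟨3, three_win⟩ fun k hk => ?_), three_win,
    not_copsHaveWinningStrategy_knights hn le_rfl⟩
  by_contra! hlt
  exact not_copsHaveWinningStrategy_knights hn (Nat.le_of_lt_succ hlt) hk
end

section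
/- Let n ≥ 5 and let G be the n×n toroidal chess graph, with three cops that are knights and a robber on foot. Consider any game position in which it is the robber's turn to move, the robber occupies a vertex r, one cop occupies r+(1,1), a second cop occupies r−(1,1), and the third cop occupies an arbitrary vertex. From any such position the cops have a winning strategy (the robber will be caught). -/
/-!
The cops on `r ± (1, 1)` attack all four neighbours of `r`, so as long as they stay put the robber
is caught as soon as he leaves `r`. Meanwhile the third cop walks to `r`: the translations that can
be composed from knight moves form a subgroup, which contains
`(1, 0) = (1, 2) + (2, -1) + (-2, -1)` and, by symmetry, `(0, 1)`, hence is everything.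
-/

open Relation

section WalkTranslations

variable {G : Type*} [AddGroup G]

/-- The group of translations `d` such that `R` leads from every `v` to `v + d` in finitely many
steps. It reduces connectedness of a translation-invariant `R` to a statement about generators;
symmetry of `R` provides the negatives. -/
def walkTranslations (R : G → G → Prop) [Std.Symm R] : AddSubgroup G where
  carrier := {d | ∀ v, ReflTransGen R v (v + d)}
  zero_mem' v := by rw [add_zero]
  add_mem' {d e} hd he v := by
    rw [← add_assoc]
    exact (hd v).trans (he (v + d))
  neg_mem' {d} hd v := by
    simpa only [neg_add_cancel_right] using symm (hd (v + -d))

variable {R : G → G → Prop} [Std.Symm R]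

theorem mem_walkTranslations {d : G} :
    d ∈ walkTranslations R ↔ ∀ v, ReflTransGen R v (v + d) :=
  Iff.rfl

theorem reflTransGen_of_walkTranslations_eq_top (h : walkTranslations R = ⊤) (v w : G) :
    ReflTransGen R v w := by
  have hd : -v + w ∈ walkTranslations R := h ▸ AddSubgroup.mem_top _
  simpa only [add_neg_cancel_left] using mem_walkTranslations.1 hd v

end WalkTranslations

section Torus

variable {n : ℕ}

theorem addSubgroup_eq_top_of_unit_vectors_mem {H : AddSubgroup (V n)}
    (h₁ : (1, 0) ∈ H) (h₂ : (0, 1) ∈ H) : H = ⊤ := by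
  refine (AddSubgroup.eq_top_iff' H).2 fun ⟨x, y⟩ => ?_
  obtain ⟨a, rfl⟩ := ZMod.intCast_surjective x
  obtain ⟨b, rfl⟩ := ZMod.intCast_surjective y
  have hab : ((a, b) : V n) = a • (1, 0) + b • (0, 1) := by ext <;> simp
  exact hab ▸ H.add_mem (H.zsmul_mem h₁ a) (H.zsmul_mem h₂ b)

theorem knightMove_symm {v w : V n} (h : knightMove n v w) : knightMove n w v := by
  have hvw : v - w = -(w - v) := (neg_sub w v).symm
  unfold knightMove
  rcases h with h | h | h | h | h | h | h | h <;> simp [hvw, h]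

instance : Std.Symm (knightMove n) :=
  ⟨fun _ _ => knightMove_symm⟩

theorem knightMove_add_right_iff {v d : V n} : knightMove n v (v + d) ↔ knightMove n 0 d := by
  simp only [knightMove, add_sub_cancel_left, sub_zero]

theorem walkTranslations_knightMove_eq_top : walkTranslations (knightMove n) = ⊤ := by
  set H := walkTranslations (knightMove n)
  have knight_mem {d : V n} (hd : knightMove n 0 d) : d ∈ H := fun _ =>
    .single (knightMove_add_right_iff.2 hd)
  apply addSubgroup_eq_top_of_unit_vectors_mem
  · have decomposition : ((1, 0) : V n) = (1, 2) + (2, -1) + (-2, -1) := by ext <;> norm_num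
    rw [decomposition]
    refine H.add_mem (H.add_mem ?_ ?_) ?_ <;> exact knight_mem (by simp [knightMove])
  · have decomposition : ((0, 1) : V n) = (2, 1) + (-1, 2) + (-1, -2) := by ext <;> norm_num
    rw [decomposition]
    refine H.add_mem (H.add_mem ?_ ?_) ?_ <;> exact knight_mem (by simp [knightMove])

theorem reflTransGen_knightMove (v w : V n) : ReflTransGen (knightMove n) v w :=
  reflTransGen_of_walkTranslations_eq_top walkTranslations_knightMove_eq_top v w

theorem knightMove_of_footMove {r s : V n} (h : footMove n r s) :
    knightMove n (r + (1, 1)) s ∨ knightMove n (r - (1, 1)) s := by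
  have from_add : s - (r + (1, 1)) = s - r - (1, 1) := by abel
  have from_sub : s - (r - (1, 1)) = s - r + (1, 1) := by abel
  unfold knightMove
  rw [from_add, from_sub]
  rcases h with h | h | h | h <;> rw [h] <;> norm_num

end Torus

section Game

theorem stayOr_update {ι α : Type*} [DecidableEq ι] {move : ι → α → α → Prop} {c : ι → α} {i : ι}
    {v : α} (h : move i (c i) v) (j : ι) : stayOr (move j) (c j) (Function.update c i v j) := by
  obtain rfl | hji := eq_or_ne j i
  · exact .inr (by rwa [Function.update_self])
  · exact .inl (Function.update_of_ne hji v c)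

variable {n k : ℕ} {copMove : Fin k → V n → V n → Prop} {robMove : V n → V n → Prop}
  {c : Fin k → V n} {r : V n}

theorem CopsWin.of_copMove {i : Fin k} (h : copMove i (c i) r) :
    CopsWin copMove robMove c r true :=
  .copsTurn (Function.update c i r) (stayOr_update h) (.caught ⟨i, Function.update_self i r c⟩)

theorem CopsWin.of_guarded_of_reflTransGen {m : Fin k}
    (guarded : ∀ s, robMove r s → ∃ i ≠ m, copMove i (c i) s)
    (walk : ReflTransGen (copMove m) (c m) r) : CopsWin copMove robMove c r false := by
  generalize hx : c m = x at walk
  induction walk using ReflTransGen.head_induction_on generalizing c with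
  | refl => exact .caught ⟨m, hx⟩
  | @head x y hxy _ ih =>
    subst hx
    refine .robTurn fun s hs => ?_
    rcases hs with rfl | hs
    · refine .copsTurn (Function.update c m y) (stayOr_update hxy) (ih ?_ ?_)
      · intro s hs
        obtain ⟨i, him, hi⟩ := guarded s hs
        exact ⟨i, him, by rwa [Function.update_of_ne him]⟩
      · exact Function.update_self m y c
    · obtain ⟨i, -, hi⟩ := guarded s hs
      exact .of_copMove hi

theorem pinned_robber_is_caught_general {i j m : Fin k} (him : i ≠ m) (hjm : j ≠ m)
    (hi : c i = r + (1, 1)) (hj : c j = r - (1, 1)) :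
    CopsWin (fun _ => knightMove n) (footMove n) c r false := by
  refine .of_guarded_of_reflTransGen (m := m) (fun s hs => ?_) (reflTransGen_knightMove (c m) r)
  rcases knightMove_of_footMove hs with h | h
  · exact ⟨i, him, hi ▸ h⟩
  · exact ⟨j, hjm, hj ▸ h⟩

end Game

/-- For `n ≥ 5`, on the `n × n` toroidal chess graph with three
knight cops and a robber on foot: from any position in which it is the robber's
turn to move, the robber occupies `r`, one cop occupies `r + (1,1)`, a second cop
occupies `r − (1,1)`, and the third cop occupies an arbitrary vertex `x`, the
cops have a winning strategy (the robber will be caught). -/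
theorem pinned_robber_is_caught (n : ℕ) (hn : 5 ≤ n) (r x : V n) :
    CopsWin (fun _ : Fin 3 => knightMove n) (footMove n)
      ![r + (1, 1), r - (1, 1), x] r false := by
  exact pinned_robber_is_caught_general (i := 0) (j := 1) (m := 2) (by decide) (by decide) rfl rfl
end

section
/- Let n ≥ 3 and let G be the n×n toroidal chess graph. In the game of Cops and Robbers on G with a single cop that is a chief and a robber on foot, the cop has a winning strategy; that is, with one chief cop and a foot robber, c(G) = 1. -/
/-- Chief (queen) moves: the target is in the same row, column, or diagonal as
the current vertex, i.e. differs from it by `(k,0)`, `(0,k)`, `(k,k)` or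
`(k,−k)` mod `n` for some nonzero `k`. -/
def chiefMove (n : ℕ) (v w : V n) : Prop :=
  ∃ k : ZMod n, k ≠ 0 ∧
    (w - v = (k, 0) ∨ w - v = (0, k) ∨ w - v = (k, k) ∨ w - v = (k, -k))

section Game

variable {n k : ℕ} {copMove : Fin k → V n → V n → Prop} {robMove : V n → V n → Prop}
  {c : Fin k → V n} {r w : V n} {i : Fin k}

theorem CopsWin.of_update (hmove : stayOr (copMove i) (c i) w)
    (hwin : CopsWin copMove robMove (Function.update c i w) r false) :
    CopsWin copMove robMove c r true := by
  refine .copsTurn _ (fun j => ?_) hwin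
  rcases eq_or_ne j i with rfl | hji
  · rwa [Function.update_self]
  · exact .inl (Function.update_of_ne hji w c)

theorem CopsWin.of_stayOr (hmove : stayOr (copMove i) (c i) r) :
    CopsWin copMove robMove c r true :=
  .of_update hmove (.caught ⟨i, Function.update_self i r c⟩)

theorem not_copsWin_fin_zero {copMove : Fin 0 → V n → V n → Prop} {c : Fin 0 → V n} {t : Bool} :
    ¬ CopsWin copMove robMove c r t := by
  intro hwin
  induction hwin with
  | caught hcaught => exact hcaught.elim fun i _ => i.elim0
  | copsTurn _ _ _ ih => exact ih
  | robTurn _ ih => exact ih _ (.inl rfl)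

theorem copNumber_eq_one_iff {copMove : ∀ k, Fin k → V n → V n → Prop} :
    copNumber n copMove robMove = 1 ↔ CopsHaveWinningStrategy 1 (copMove 1) robMove := by
  have zero_loses : ¬ CopsHaveWinningStrategy 0 (copMove 0) robMove :=
    fun ⟨_, hwin⟩ => not_copsWin_fin_zero (hwin 0)
  constructor
  · intro hone
    have hmem := Nat.sInf_mem (Nat.nonempty_of_sInf_eq_succ hone)
    rwa [show sInf _ = 1 from hone] at hmem
  · intro hwin
    refine le_antisymm (Nat.sInf_le hwin) (le_csInf ⟨1, hwin⟩ fun k hk => ?_)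
    exact Nat.one_le_iff_ne_zero.mpr fun hzero => zero_loses (hzero ▸ hk)

end Game

section Moves

variable {n : ℕ} {u v w : V n}

theorem stayOr_chiefMove_iff :
    stayOr (chiefMove n) v w ↔
      w.1 - v.1 = 0 ∨ w.2 - v.2 = 0 ∨ w.1 - v.1 = w.2 - v.2 ∨ w.1 - v.1 = -(w.2 - v.2) := by
  constructor
  · rintro (rfl | ⟨k, -, h⟩)
    · simp
    · simp only [Prod.ext_iff, Prod.fst_sub, Prod.snd_sub] at h
      rcases h with h | h | h | h <;> simp [h]
  · intro h
    by_cases hwv : w = v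
    · exact .inl hwv
    right
    simp only [chiefMove, Prod.ext_iff, Prod.fst_sub, Prod.snd_sub]
    by_cases hfst : w.1 - v.1 = 0
    · have hsnd : w.2 - v.2 ≠ 0 := fun hsnd =>
        hwv (Prod.ext (sub_eq_zero.mp hfst) (sub_eq_zero.mp hsnd))
      exact ⟨w.2 - v.2, hsnd, by simp [hfst]⟩
    · exact ⟨w.1 - v.1, hfst, by grind⟩

theorem stayOr_footMove_iff_s11 :
    stayOr (footMove n) v w ↔
      (w.1 - v.1 = 0 ∧ (w.2 - v.2 = 0 ∨ w.2 - v.2 = 1 ∨ w.2 - v.2 = -1)) ∨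
        (w.2 - v.2 = 0 ∧ (w.1 - v.1 = 1 ∨ w.1 - v.1 = -1)) := by
  simp only [stayOr, footMove, Prod.ext_iff, Prod.fst_sub, Prod.snd_sub, sub_eq_zero]
  tauto

theorem stayOr_chiefMove_of_two_footMoves (huv : stayOr (footMove n) u v)
    (hvw : stayOr (footMove n) v w) : stayOr (chiefMove n) u w := by
  rw [stayOr_footMove_iff_s11] at huv hvw
  rw [stayOr_chiefMove_iff]
  grind

theorem stayOr_footMove_mk_fst_snd (hvw : stayOr (footMove n) v w) :
    stayOr (footMove n) (w.1, v.2) w := by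
  rw [stayOr_footMove_iff_s11] at hvw ⊢
  grind

end Moves

section Chief

variable {n k : ℕ} {copMove : Fin k → V n → V n → Prop} {c : Fin k → V n} {r : V n} {i : Fin k}

theorem copsWin_of_chief_near (hchief : copMove i = chiefMove n)
    (hnear : stayOr (footMove n) (c i) r) : CopsWin copMove (footMove n) c r false :=
  .robTurn fun _ hr' => .of_stayOr (hchief ▸ stayOr_chiefMove_of_two_footMoves hnear hr')

theorem copsWin_of_chief_snd_eq (hchief : copMove i = chiefMove n) (hrow : (c i).2 = r.2) :
    CopsWin copMove (footMove n) c r false := by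
  refine .robTurn fun r' hr' => ?_
  have hmove : stayOr (copMove i) (c i) (r'.1, r.2) := by
    simp [hchief, stayOr_chiefMove_iff, hrow]
  refine .of_update hmove (copsWin_of_chief_near hchief ?_)
  simpa only [Function.update_self] using stayOr_footMove_mk_fst_snd hr'

theorem copsWin_of_chief (hchief : copMove i = chiefMove n) (c : Fin k → V n) (r : V n) :
    CopsWin copMove (footMove n) c r true := by
  have hmove : stayOr (copMove i) (c i) ((c i).1, r.2) := by
    simp [hchief, stayOr_chiefMove_iff]
  exact .of_update hmove (copsWin_of_chief_snd_eq hchief (by rw [Function.update_self]))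

theorem copsHaveWinningStrategy_of_chief (hchief : copMove i = chiefMove n) :
    CopsHaveWinningStrategy k copMove (footMove n) :=
  ⟨0, copsWin_of_chief hchief 0⟩

end Chief

/-- For `n ≥ 3`, on the `n × n` toroidal chess graph with a
single cop that is a chief and a robber on foot, the cop has a winning strategy;
that is, with one chief cop (any further cops being on foot) and a foot robber,
`c(G) = 1`. -/
theorem one_chief_catches_foot_robber (n : ℕ) (hn : 3 ≤ n) :
    CopsHaveWinningStrategy 1 (fun _ : Fin 1 => chiefMove n) (footMove n) ∧
    copNumber n
      (fun _ i => if (i : ℕ) = 0 then chiefMove n else footMove n)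
      (footMove n) = 1 :=
  ⟨copsHaveWinningStrategy_of_chief (i := 0) rfl,
    copNumber_eq_one_iff.mpr (copsHaveWinningStrategy_of_chief (i := 0) (if_pos rfl))⟩
end

section
/- Let n ≥ 3, let 1 ≤ m < n, and let G be the n×n toroidal chess graph, with a single cop that is a chief and an m-speedy robber. The chief has a strategy guaranteeing that at every point of the game, either the robber has already been captured or the robber occupies a vertex in the same row as the vertex he originally occupied; that is, a chief can guarantee that an m-speedy robber never leaves the row it originally occupies. -/
/-- `m`-speedy moves: the target is in the same row or column at distance at most
`m` from the current vertex, i.e. differs from it by `(j,0)` or `(0,j)` mod `n`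
for some integer `j` with `1 ≤ |j| ≤ m`. -/
def speedyMove (n m : ℕ) (v w : V n) : Prop :=
  ∃ j : ℤ, 1 ≤ |j| ∧ |j| ≤ (m : ℤ) ∧
    (w - v = ((j : ZMod n), 0) ∨ w - v = (0, (j : ZMod n)))

/-- The history of the play after `t` full rounds: the list of states
`(cop position, robber position)` from time `t` back down to time `0`. -/
def hist {n : ℕ} (c r : ℕ → V n) : ℕ → List (V n × V n)
  | 0 => [(c 0, r 0)]
  | t + 1 => (c (t + 1), r (t + 1)) :: hist c r t

/-!
The chief shadows the robber: each of its moves ends in the robber's column, sliding along its own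
row to get there, or capturing outright if it is already in that column. A robber who then leaves
his row moves within the column he shares with the chief, who captures him on the next move.
-/

section Shadow

variable {α β : Type*} [DecidableEq α]

/-- The shadowing response of a pursuer at `v` to an evader at `w` on the board `α × β`, whose
columns are the fibres of `Prod.fst`: capture if they share a column, and otherwise move along the
pursuer's row into the evader's column. -/
def shadow (v w : α × β) : α × β :=
  if v.1 = w.1 then w else (w.1, v.2)

lemma shadow_of_fst_eq {v w : α × β} (h : v.1 = w.1) : shadow v w = w :=
  if_pos h

lemma shadow_of_fst_ne {v w : α × β} (h : v.1 ≠ w.1) : shadow v w = (w.1, v.2) :=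
  if_neg h

lemma shadow_fst (v w : α × β) : (shadow v w).1 = w.1 := by
  unfold shadow
  split_ifs <;> rfl

lemma shadow_shadow_of_fst_eq (v : α × β) {w w' : α × β} (h : w'.1 = w.1) :
    shadow (shadow v w) w' = w' :=
  shadow_of_fst_eq ((shadow_fst v w).trans h.symm)

lemma exists_captured_or_snd_eq_of_shadow {c r : ℕ → α × β}
    (hc : ∀ t, c (t + 1) = shadow (c t) (r t))
    (hr : ∀ t, (r (t + 1)).1 = (r t).1 ∨ (r (t + 1)).2 = (r t).2) (t : ℕ) :
    (∃ s ≤ t, c (s + 1) = r s) ∨ (r t).2 = (r 0).2 := by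
  induction t with
  | zero => exact Or.inr rfl
  | succ t ih =>
    rcases ih with ⟨s, hst, hcapture⟩ | hrow
    · exact Or.inl ⟨s, hst.trans t.le_succ, hcapture⟩
    rcases hr t with hsameCol | hsameRow
    · have hcapture : c (t + 1 + 1) = r (t + 1) := by
        rw [hc (t + 1), hc t, shadow_shadow_of_fst_eq _ hsameCol]
      exact Or.inl ⟨t + 1, le_rfl, hcapture⟩
    · exact Or.inr (hsameRow.trans hrow)

end Shadow

section ToroidalBoard

variable {n : ℕ}

lemma stayOr_chiefMove_of_fst_eq {v w : V n} (h : v.1 = w.1) : stayOr (chiefMove n) v w := by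
  by_cases hsnd : v.2 = w.2
  · exact Or.inl (Prod.ext h hsnd).symm
  · have hdiff : w - v = (0, w.2 - v.2) := Prod.ext (sub_eq_zero.mpr h.symm) rfl
    exact Or.inr ⟨w.2 - v.2, sub_ne_zero.mpr (Ne.symm hsnd), Or.inr (Or.inl hdiff)⟩

lemma chiefMove_of_fst_ne {v : V n} {a : ZMod n} (h : v.1 ≠ a) : chiefMove n v (a, v.2) :=
  ⟨a - v.1, sub_ne_zero.mpr h.symm, Or.inl (Prod.ext rfl (sub_self v.2))⟩

lemma stayOr_chiefMove_shadow (v w : V n) : stayOr (chiefMove n) v (shadow v w) := by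
  by_cases h : v.1 = w.1
  · rw [shadow_of_fst_eq h]
    exact stayOr_chiefMove_of_fst_eq h
  · rw [shadow_of_fst_ne h]
    exact Or.inr (chiefMove_of_fst_ne h)

lemma fst_eq_or_snd_eq_of_stayOr_speedyMove {m : ℕ} {v w : V n}
    (h : stayOr (speedyMove n m) v w) : w.1 = v.1 ∨ w.2 = v.2 := by
  rcases h with rfl | ⟨j, -, -, hrow | hcol⟩
  · exact Or.inl rfl
  · exact Or.inr (sub_eq_zero.mp (congrArg Prod.snd hrow))
  · exact Or.inl (sub_eq_zero.mp (congrArg Prod.fst hcol))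

lemma hist_headD (c r : ℕ → V n) (t : ℕ) (p : V n × V n) :
    (hist c r t).headD p = (c t, r t) := by
  cases t <;> rfl

end ToroidalBoard

/-- The case `n = 0` is the infinite board `ℤ × ℤ`, as `ZMod 0` is `ℤ`. -/
theorem chief_confines_speedy_robber_to_initial_row_general (n : ℕ) :
    ∃ σ : List (V n × V n) → V n,
      ∀ c r : ℕ → V n,
        (∀ t, c (t + 1) = σ (hist c r t)) →
        (∀ t, (r (t + 1)).1 = (r t).1 ∨ (r (t + 1)).2 = (r t).2) →
        (∀ t, stayOr (chiefMove n) (c t) (c (t + 1))) ∧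
        (∀ t, (∃ s ≤ t, c s = r s ∨ c (s + 1) = r s) ∨ (r t).2 = (r 0).2) := by
  refine ⟨fun l => Function.uncurry shadow (l.headD 0), fun c r hc hr => ?_⟩
  have hshadow (t : ℕ) : c (t + 1) = shadow (c t) (r t) :=
    (hc t).trans (congrArg (Function.uncurry shadow) (hist_headD c r t 0))
  refine ⟨fun t => hshadow t ▸ stayOr_chiefMove_shadow (c t) (r t), fun t => ?_⟩
  exact (exists_captured_or_snd_eq_of_shadow hshadow hr t).imp_left
    fun ⟨s, hst, hcapture⟩ => ⟨s, hst, Or.inr hcapture⟩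

/-- Let `n ≥ 3` and `1 ≤ m < n`.  On the `n × n` toroidal chess
graph with a single chief cop and an `m`-speedy robber, the chief has a strategy
(a starting vertex `c₀` together with a response `σ` to every history of the
play) guaranteeing that at every point of the game, either the robber has
already been captured (at some interleaved point so far, the cop occupied the
robber's vertex) or the robber occupies a vertex in the same row (second
coordinate) as the vertex it originally occupied: a chief can guarantee that an
`m`-speedy robber never leaves the row it originally occupies.  Here `c t` and
`r t` denote the positions after the cop's, resp. the robber's, `t`-th move
(the cop moving first in each round), the cop's moves being dictated by `σ` and
the robber's moves being arbitrary allowable ones; the chief's dictated moves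
are moreover always allowable chief moves. -/
theorem chief_confines_speedy_robber_to_initial_row (n m : ℕ)
    (hn : 3 ≤ n) (hm : 1 ≤ m) (hmn : m < n) :
    ∃ c₀ : V n, ∃ σ : List (V n × V n) → V n,
      ∀ c r : ℕ → V n,
        c 0 = c₀ →
        (∀ t, c (t + 1) = σ (hist c r t)) →
        (∀ t, stayOr (speedyMove n m) (r t) (r (t + 1))) →
        (∀ t, stayOr (chiefMove n) (c t) (c (t + 1))) ∧
        (∀ t, (∃ s ≤ t, c s = r s ∨ c (s + 1) = r s) ∨ (r t).2 = (r 0).2) := by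
  obtain ⟨σ, hσ⟩ := chief_confines_speedy_robber_to_initial_row_general n
  exact ⟨0, σ, fun c r _ hc hr =>
    hσ c r hc fun t => fst_eq_or_snd_eq_of_stayOr_speedyMove (hr t)⟩
end

section
/- Let m ≥ 1. For all sufficiently large n, the following holds on the n×n toroidal chess graph: in the game of Cops and Robbers with an m-speedy robber, one cop that is a chief together with 2⌈m/3⌉ cops on foot have a winning strategy (a total of 2⌈m/3⌉ + 1 cops suffice to capture the robber). -/
/-- The allowable moves of a team led by a chief, which is cop `0`; all the others are on foot. -/
def teamMove (n : ℕ) {k : ℕ} (i : Fin k) : V n → V n → Prop :=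
  if (i : ℕ) = 0 then chiefMove n else footMove n

/-- The columns of the foot cops, as integers. Cops `0, …, q - 1` form the left wall, which guards
the columns `L - 3q + 1, …, L`, and cops `q, …, 2q - 1` the right wall, which guards the columns
`R, …, R + 3q - 1`. The gap between the walls consists of the columns strictly between `L`
and `R`. -/
def wallCol (q : ℕ) (L R : ℤ) (i : Fin (2 * q)) : ℤ :=
  if (i : ℕ) < q then L - 1 - 3 * i else R + 1 + 3 * (i - q)

/-- The position of the team with the chief on `p` and the two walls of foot cops in row `h`. -/
def wallPos (n q : ℕ) (L R : ℤ) (h : ZMod n) (p : V n) : Fin (2 * q + 1) → V n :=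
  Fin.cons p fun i => ((wallCol q L R i : ZMod n), h)

section

variable {n m q k : ℕ}

@[simp]
lemma teamMove_zero : teamMove n (0 : Fin (k + 1)) = chiefMove n := by
  simp [teamMove]

@[simp]
lemma teamMove_succ (i : Fin k) : teamMove n i.succ = footMove n := by
  simp [teamMove]

lemma stayOr_chiefMove_row (a b h : ZMod n) : stayOr (chiefMove n) (a, h) (b, h) := by
  by_cases hab : b = a
  · exact .inl (by rw [hab])
  · exact .inr ⟨b - a, sub_ne_zero.2 hab, .inl (by simp)⟩

lemma stayOr_chiefMove_col (a h h' : ZMod n) : stayOr (chiefMove n) (a, h) (a, h') := by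
  by_cases hh : h' = h
  · exact .inl (by rw [hh])
  · exact .inr ⟨h' - h, sub_ne_zero.2 hh, .inr (.inl (by simp))⟩

lemma stayOr_footMove_of_abs_sub_le_one {a b : ℤ} (h : ZMod n) (hab : |b - a| ≤ 1) :
    stayOr (footMove n) ((a : ZMod n), h) ((b : ZMod n), h) := by
  rw [abs_le] at hab
  obtain rfl | rfl | rfl : b = a ∨ b = a + 1 ∨ b = a - 1 := by omega
  · exact .inl rfl
  · exact .inr (.inl (by simp))
  · exact .inr (.inr (.inl (by simp)))

lemma footMove_sub_one_left (a h : ZMod n) : footMove n (a, h - 1) (a, h) :=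
  .inr (.inr (.inl (by simp)))

lemma CopsWin.of_capture {copMove : Fin k → V n → V n → Prop} {robMove : V n → V n → Prop}
    {c : Fin k → V n} {r : V n} (i : Fin k) (h : stayOr (copMove i) (c i) r) :
    CopsWin copMove robMove c r true := by
  refine .copsTurn (Function.update c i r) (fun j => ?_) (.caught ⟨i, by simp⟩)
  obtain rfl | hj := eq_or_ne j i
  · simpa using h
  · exact .inl (by simp [hj])

lemma CopsWin.of_chief_in_column {copMove : Fin k → V n → V n → Prop} {c : Fin k → V n}
    {x b y : ZMod n} (i : Fin k) (hchief : copMove i = chiefMove n) (hc : c i = (x, b))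
    (hrow : ∀ j : ℤ, j ≠ 0 → |j| ≤ m → CopsWin copMove (speedyMove n m) c (x + j, y) true) :
    CopsWin copMove (speedyMove n m) c (x, y) false := by
  have captured_in_column (z : ZMod n) : CopsWin copMove (speedyMove n m) c (x, z) true :=
    .of_capture i (by simpa [hchief, hc] using stayOr_chiefMove_col x b z)
  refine .robTurn fun r' hr' => ?_
  rcases hr' with rfl | ⟨j, hj, hjm, hmove | hmove⟩
  · exact captured_in_column y
  · obtain rfl : r' = (x + j, y) := by simpa using sub_eq_iff_eq_add'.1 hmove
    exact hrow j (abs_pos.1 hj) hjm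
  · obtain rfl : r' = (x, y + j) := by simpa using sub_eq_iff_eq_add'.1 hmove
    exact captured_in_column (y + j)

lemma copsWin_wallPos_of_step {L R L' R' : ℤ} {h h' a b x y : ZMod n}
    (hfoot : ∀ i, stayOr (footMove n) ((wallCol q L R i : ZMod n), h)
      ((wallCol q L' R' i : ZMod n), h'))
    (hrow : ∀ j : ℤ, j ≠ 0 → |j| ≤ m →
      CopsWin (teamMove n) (speedyMove n m) (wallPos n q L' R' h' (x, b)) (x + j, y) true) :
    CopsWin (teamMove n) (speedyMove n m) (wallPos n q L R h (a, b)) (x, y) true := by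
  refine .copsTurn (wallPos n q L' R' h' (x, b)) (Fin.cases ?_ fun i => ?_)
    (.of_chief_in_column 0 teamMove_zero rfl hrow)
  · simpa [wallPos] using stayOr_chiefMove_row a x b
  · simpa [wallPos] using hfoot i

lemma abs_wallCol_sub_wallCol_le_one {L R L' R' : ℤ} (hL : |L' - L| ≤ 1) (hR : |R' - R| ≤ 1)
    (i : Fin (2 * q)) : |wallCol q L' R' i - wallCol q L R i| ≤ 1 := by
  rw [abs_le] at *
  unfold wallCol
  split_ifs <;> omega

lemma exists_abs_sub_wallCol_le_one {L R z : ℤ}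
    (hz : z ∈ Set.Ioc (L - 3 * q) L ∪ Set.Ico R (R + 3 * q)) :
    ∃ i, |z - wallCol q L R i| ≤ 1 := by
  simp only [abs_le, wallCol]
  rcases hz with ⟨hlow, hhigh⟩ | ⟨hlow, hhigh⟩
  · refine ⟨⟨(L - z).toNat / 3, by omega⟩, ?_⟩
    rw [if_pos (by dsimp only; omega)]
    dsimp only
    omega
  · refine ⟨⟨q + (z - R).toNat / 3, by omega⟩, ?_⟩
    rw [if_neg (by simp)]
    dsimp only
    omega

lemma copsWin_wallPos_of_guarded {L R z : ℤ} {y : ZMod n} {p : V n}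
    (hz : z ∈ Set.Ioc (L - 3 * q) L ∪ Set.Ico R (R + 3 * q)) :
    CopsWin (teamMove n) (speedyMove n m) (wallPos n q L R y p) (z, y) true := by
  obtain ⟨i, hi⟩ := exists_abs_sub_wallCol_le_one hz
  exact .of_capture i.succ (by simpa [wallPos] using stayOr_footMove_of_abs_sub_le_one y hi)

lemma exists_walls_advance {L R x : ℤ} (hL : L < x) (hR : x < R) :
    ∃ L' R' : ℤ, |L' - L| ≤ 1 ∧ |R' - R| ≤ 1 ∧ L' < x ∧ x < R' ∧
      (R' - L' < R - L ∨ L' + 1 = x ∧ x + 1 = R') := by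
  simp only [abs_le]
  by_cases left_touched : x = L + 1
  · by_cases right_touched : x = R - 1
    · exact ⟨L, R, by omega⟩
    · exact ⟨L, R - 1, by omega⟩
  · exact ⟨L + 1, R, by omega⟩

lemma copsWin_wallPos_of_mem_gap (hmq : m ≤ 3 * q) {L R x : ℤ} {a b y : ZMod n}
    (hL : L < x) (hR : x < R) :
    CopsWin (teamMove n) (speedyMove n m) (wallPos n q L R y (a, b)) (x, y) true := by
  obtain ⟨g, hg⟩ : ∃ g : ℕ, R - L ≤ g := ⟨(R - L).toNat, Int.self_le_toNat _⟩
  induction g generalizing L R x a with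
  | zero => omega
  | succ g ih =>
    obtain ⟨L', R', hLL', hRR', hL', hR', hshrink_or_touched⟩ := exists_walls_advance hL hR
    refine copsWin_wallPos_of_step (fun i => stayOr_footMove_of_abs_sub_le_one y
      (abs_wallCol_sub_wallCol_le_one hLL' hRR' i)) fun j hj hjm => ?_
    rw [← Int.cast_add]
    rw [abs_le] at hjm
    rcases le_or_gt (x + j) L' with hleft | hleft
    · exact copsWin_wallPos_of_guarded (.inl ⟨by omega, hleft⟩)
    rcases le_or_gt R' (x + j) with hright | hright
    · exact copsWin_wallPos_of_guarded (.inr ⟨hright, by omega⟩)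
    have hgap : R' - L' < R - L := by omega
    exact ih hleft hright (by omega)

-- The gap between `-1` and `n` holds a representative of every column.
lemma copsWin_wallPos_of_row_eq [NeZero n] (hmq : m ≤ 3 * q) (a b x y : ZMod n) :
    CopsWin (teamMove n) (speedyMove n m) (wallPos n q (-1) n y (a, b)) (x, y) true := by
  have hx : ((x.val : ℤ) : ZMod n) = x := by simp
  have hlt : x.val < n := x.val_lt
  rw [← hx]
  exact copsWin_wallPos_of_mem_gap hmq (by omega) (by omega)

lemma copsWin_wallPos_of_row_eq_sub [NeZero n] (hmq : m ≤ 3 * q) (a b x y : ZMod n) (d : ℕ) :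
    CopsWin (teamMove n) (speedyMove n m) (wallPos n q (-1) n (y - d) (a, b)) (x, y) true := by
  induction d generalizing a x with
  | zero => simpa using copsWin_wallPos_of_row_eq hmq a b x y
  | succ d ih =>
    rw [Nat.cast_succ, ← sub_sub]
    exact copsWin_wallPos_of_step (fun _ => .inr (footMove_sub_one_left _ _)) fun _ _ _ => ih _ _

end

theorem chief_with_enough_foot_cops_wins_general (n : ℕ) [NeZero n] {m q : ℕ} (hmq : m ≤ 3 * q) :
    CopsHaveWinningStrategy (2 * q + 1)
      (fun i : Fin (2 * q + 1) => if (i : ℕ) = 0 then chiefMove n else footMove n)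
      (speedyMove n m) := by
  refine ⟨wallPos n q (-1) n 0 (0, 0), fun ⟨x, y⟩ => ?_⟩
  have hrow : y - (y.val : ZMod n) = 0 := by simp
  have hwin := copsWin_wallPos_of_row_eq_sub hmq 0 0 x y y.val
  rwa [hrow] at hwin

/-- Let `m ≥ 1`.  For all sufficiently large `n`, on the
`n × n` toroidal chess graph, in the game with an `m`-speedy robber, one cop
that is a chief (cop `0`) together with `2⌈m/3⌉` cops on foot (note
`⌈m/3⌉ = (m + 2) / 3` in natural-number arithmetic) have a winning strategy:
a total of `2⌈m/3⌉ + 1` cops suffice to capture the robber. -/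
theorem chief_with_enough_foot_cops_wins (m : ℕ) (hm : 1 ≤ m) :
    ∃ N : ℕ, ∀ n : ℕ, N ≤ n →
      CopsHaveWinningStrategy (2 * ((m + 2) / 3) + 1)
        (fun i : Fin (2 * ((m + 2) / 3) + 1) =>
          if (i : ℕ) = 0 then chiefMove n else footMove n)
        (speedyMove n m) := by
  refine ⟨1, fun n hn => ?_⟩
  have : NeZero n := ⟨by omega⟩
  exact chief_with_enough_foot_cops_wins_general n (by omega)
end
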